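/- Let ℓ be an odd prime, q = p^n a prime power, r = ℓ, k = (q^ℓ − 1)/(q − 1), and 0 ≤ a,b ≤ q−2. Define T_ℓ(a,b) = {x ∈ 𝔽_q : x^ℓ = ω^{ak} and (x+1)^ℓ = ω^{bk}} and let I_ℓ(a,b) be the set of monic irreducible polynomials f ∈ 𝔽_q[X] of degree ℓ with f(0) = −ω^{ak} and f(−1) = −ω^{bk}. Then (a,b)_{q−1} = #T_ℓ(a,b) + ℓ · #I_ℓ(a,b). -/

import Mathlib

/-- `x` lies in the cyclotomic coset `C_a = ω^a ⟨ω^e⟩` of `Fˣ`. -/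
def InCycCoset {F : Type*} [Field F] (ω : Fˣ) (e a : ℕ) (x : Fˣ) : Prop :=
  ∃ m : ℕ, x = ω ^ a * (ω ^ e) ^ m

/-- The cyclotomic number `(a,b)_e` : the number of `x ∈ C_a` with `x + 1 ∈ C_b`. -/
noncomputable def cycNum {F : Type*} [Field F] (ω : Fˣ) (e a b : ℕ) : ℕ :=
  Nat.card {x : Fˣ | InCycCoset ω e a x ∧ ∃ y : Fˣ, InCycCoset ω e b y ∧ (y : F) = (x : F) + 1}

/-!
Membership in the coset `C_a` is the norm condition `N x = N(ω) ^ a`, because `N x = x ^ k` and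
`⟨ω ^ (q - 1)⟩` is the kernel of `x ↦ x ^ k`. Hence `(a,b)_{q-1}` counts the `x` for which `N x`
and `N (x + 1)` are prescribed. Both norms are, up to sign, powers of values of the minimal
polynomial of `x`, at `0` and at `-1`, so the count can be grouped by minimal polynomials: every
monic irreducible polynomial of degree `d ∣ r` is the minimal polynomial of exactly `d` elements.
For prime `r = ℓ` only `d = 1`, which gives `T_ℓ(a,b)`, and `d = ℓ`, which gives `I_ℓ(a,b)`, occur.
-/

open Polynomial Module

theorem natCard_eq_mul_of_natCard_fiber_eq {α β : Type*} (g : α → β) {c : ℕ} (hc : c ≠ 0)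
    (hg : ∀ y, Nat.card {x // g x = y} = c) : Nat.card α = c * Nat.card β := by
  have fiberEquiv (y : β) : {x // g x = y} ≃ Fin c :=
    (Nat.equivFinOfCardPos (by rwa [hg y])).trans (finCongr (hg y))
  rw [Nat.card_congr ((Equiv.sigmaFiberEquiv g).symm.trans
    (Equiv.sigmaEquivProdOfEquiv fiberEquiv)), Nat.card_prod, Nat.card_fin, mul_comm]

theorem natCard_setOf_eq_sum_fiberwise {α ι : Type*} [Finite α] (P : α → Prop)
    (g : α → ι) (t : Finset ι) (hg : ∀ x, g x ∈ t) :
    Nat.card {x | P x} = ∑ i ∈ t, Nat.card {x | g x = i ∧ P x} := by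
  classical
  cases nonempty_fintype α
  simp only [Set.coe_ofPred, Nat.card_eq_fintype_card, Fintype.card_subtype]
  rw [Finset.card_eq_sum_card_fiberwise fun x _ ↦ hg x]
  simp only [Finset.filter_filter, and_comm]

theorem natCard_monic_irreducible_natDegree_one {R : Type*} [CommRing R] [IsDomain R]
    (P : R[X] → Prop) :
    Nat.card {f : R[X] | f.Monic ∧ Irreducible f ∧ f.natDegree = 1 ∧ P f} =
      Nat.card {x : R | P (X - C x)} := by
  refine (Nat.card_congr (Equiv.ofBijective
    (fun x ↦ ⟨X - C x.1, monic_X_sub_C _, irreducible_X_sub_C _, natDegree_X_sub_C _, x.2⟩)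
    ⟨fun x y hxy ↦ ?_, ?_⟩)).symm
  · exact Subtype.ext (by simpa using hxy)
  · rintro ⟨f, hmonic, -, hdeg, hf⟩
    obtain ⟨c, rfl⟩ : ∃ c, f = X - C c :=
      ⟨-f.coeff 0, by simpa using hmonic.eq_X_add_C hdeg⟩
    exact ⟨⟨c, hf⟩, rfl⟩

section NormMinpoly

variable {K F : Type*} [Field K] [Field F] [Algebra K F] [FiniteDimensional K F]

theorem norm_eq_neg_one_pow_mul_eval_zero_minpoly (x : F) :
    Algebra.norm K x = (-1) ^ finrank K F *
      (minpoly K x).eval 0 ^ (finrank K F / (minpoly K x).natDegree) := by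
  have hx : IsIntegral K x := .of_finite K x
  have hdeg : finrank K (IntermediateField.adjoin K {x}) = (minpoly K x).natDegree :=
    IntermediateField.adjoin.finrank hx
  have htower := finrank_mul_finrank K (IntermediateField.adjoin K {x}) F
  have hgen : Algebra.norm K (IntermediateField.AdjoinSimple.gen K x) =
      (-1) ^ (minpoly K x).natDegree * (minpoly K x).eval 0 := by
    rw [← IntermediateField.adjoin.powerBasis_gen hx,
      Algebra.PowerBasis.norm_gen_eq_coeff_zero_minpoly, ← PowerBasis.finrank, hdeg,
      IntermediateField.adjoin.powerBasis_gen hx, IntermediateField.minpoly_gen,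
      coeff_zero_eq_eval_zero]
  rw [Algebra.norm_eq_norm_adjoin K x, hgen, ← htower, hdeg,
    Nat.mul_div_cancel_left _ (minpoly.natDegree_pos hx), mul_pow, ← pow_mul]

theorem norm_sub_algebraMap_eq_neg_one_pow_mul_eval_minpoly (x : F) (c : K) :
    Algebra.norm K (x - algebraMap K F c) = (-1) ^ finrank K F *
      (minpoly K x).eval c ^ (finrank K F / (minpoly K x).natDegree) := by
  rw [norm_eq_neg_one_pow_mul_eval_zero_minpoly, minpoly.sub_algebraMap, natDegree_comp,
    natDegree_X_add_C, mul_one, eval_comp, eval_add, eval_X, eval_C, zero_add]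

theorem norm_sub_algebraMap_eq_iff (x : F) (c y : K) :
    Algebra.norm K (x - algebraMap K F c) = y ↔
      (minpoly K x).eval c ^ (finrank K F / (minpoly K x).natDegree) =
        (-1) ^ finrank K F * y := by
  have hsign : ((-1 : K) ^ finrank K F) * (-1) ^ finrank K F = 1 := by simp [← mul_pow]
  rw [norm_sub_algebraMap_eq_neg_one_pow_mul_eval_minpoly]
  constructor <;> intro h
  · rw [← h, ← mul_assoc, hsign, one_mul]
  · rw [h, ← mul_assoc, hsign, one_mul]

end NormMinpoly

section FiniteField

variable {K F : Type*} [Field K] [Field F] [Algebra K F] [Finite F]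

theorem splits_map_of_irreducible_of_natDegree_dvd_finrank {f : K[X]} (hf : Irreducible f)
    (hdvd : f.natDegree ∣ finrank K F) : (f.map (algebraMap K F)).Splits := by
  have : Finite K := .of_injective _ (algebraMap K F).injective
  have hdvd_X : f.map (algebraMap K F) ∣ X ^ Nat.card F - X := by
    simpa [natCard_eq_pow_finrank (K := K) (V := F)] using
      map_dvd (algebraMap K F) (hf.natDegree_dvd_iff_dvd_X_pow_card_pow_sub_X.1 hdvd)
  exact (Polynomial.splits_X_pow_nat_card_sub_X (K := F)).of_dvd
    (FiniteField.X_pow_card_sub_X_ne_zero F Finite.one_lt_card) hdvd_X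

theorem natCard_minpoly_eq {f : K[X]} (hmonic : f.Monic) (hirr : Irreducible f)
    (hdvd : f.natDegree ∣ finrank K F) : Nat.card {x : F // minpoly K x = f} = f.natDegree := by
  have : Finite K := .of_injective _ (algebraMap K F).injective
  have mem_rootSet_iff (x : F) : minpoly K x = f ↔ x ∈ f.rootSet F := by
    rw [mem_rootSet]
    exact ⟨fun h ↦ ⟨hirr.ne_zero, h ▸ minpoly.aeval K x⟩,
      fun h ↦ (minpoly.eq_of_irreducible_of_monic hirr h.2 hmonic).symm⟩
  rw [Nat.card_congr (Equiv.subtypeEquivRight mem_rootSet_iff), Nat.card_eq_fintype_card]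
  exact card_rootSet_eq_natDegree (PerfectField.separable_of_irreducible hirr)
    (splits_map_of_irreducible_of_natDegree_dvd_finrank hirr hdvd)

theorem natCard_natDegree_minpoly_eq {d : ℕ} (hd : d ∣ finrank K F) (P : K[X] → Prop) :
    Nat.card {x : F | (minpoly K x).natDegree = d ∧ P (minpoly K x)} =
      d * Nat.card {f : K[X] | f.Monic ∧ Irreducible f ∧ f.natDegree = d ∧ P f} := by
  have hint (x : F) : IsIntegral K x := .of_finite K x
  have hd0 : d ≠ 0 := ne_zero_of_dvd_ne_zero finrank_pos.ne' hd
  refine natCard_eq_mul_of_natCard_fiber_eq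
    (fun x ↦ ⟨minpoly K x.1, minpoly.monic (hint x), minpoly.irreducible (hint x), x.2⟩) hd0 ?_
  rintro ⟨f, hmonic, hirr, rfl, hP⟩
  simp only [Subtype.mk.injEq]
  have hfiber {x : F} (hx : minpoly K x = f) :
      (minpoly K x).natDegree = f.natDegree ∧ P (minpoly K x) := by
    simp only [hx, hP, and_self]
  exact (Nat.card_congr (Equiv.subtypeSubtypeEquivSubtype hfiber)).trans
    (natCard_minpoly_eq hmonic hirr hd)

theorem natCard_minpoly_eq_sum_divisors (P : K[X] → Prop) :
    Nat.card {x : F | P (minpoly K x)} = ∑ d ∈ (finrank K F).divisors,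
      d * Nat.card {f : K[X] | f.Monic ∧ Irreducible f ∧ f.natDegree = d ∧ P f} := by
  have hdeg (x : F) : (minpoly K x).natDegree ∈ (finrank K F).divisors :=
    Nat.mem_divisors.2 ⟨minpoly.degree_dvd (.of_finite K x), finrank_pos.ne'⟩
  rw [natCard_setOf_eq_sum_fiberwise _ _ _ hdeg]
  exact Finset.sum_congr rfl fun d hd ↦
    natCard_natDegree_minpoly_eq (Nat.dvd_of_mem_divisors hd) P

theorem natCard_norm_eq_and_norm_add_one_eq (y z : K) :
    Nat.card {x : F | Algebra.norm K x = y ∧ Algebra.norm K (x + 1) = z} =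
      ∑ d ∈ (finrank K F).divisors, d * Nat.card {f : K[X] |
        f.Monic ∧ Irreducible f ∧ f.natDegree = d ∧
        f.eval 0 ^ (finrank K F / d) = (-1) ^ finrank K F * y ∧
        f.eval (-1) ^ (finrank K F / d) = (-1) ^ finrank K F * z} := by
  let P (f : K[X]) : Prop :=
    f.eval 0 ^ (finrank K F / f.natDegree) = (-1) ^ finrank K F * y ∧
    f.eval (-1) ^ (finrank K F / f.natDegree) = (-1) ^ finrank K F * z
  have hnorm (x : F) : Algebra.norm K x = y ∧ Algebra.norm K (x + 1) = z ↔ P (minpoly K x) :=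
    and_congr (by simpa using norm_sub_algebraMap_eq_iff x 0 y)
      (by simpa using norm_sub_algebraMap_eq_iff x (-1) z)
  simp only [hnorm, natCard_minpoly_eq_sum_divisors P]
  congr! 6 with d _ f
  grind

end FiniteField

section CyclotomicCosets

variable {F : Type*} [Field F] [Finite F] {ω : Fˣ}

theorem inCycCoset_iff_pow_eq (hω : ∀ x : Fˣ, x ∈ Subgroup.zpowers ω) {e k : ℕ}
    (hcard : Nat.card Fˣ = e * k) (a : ℕ) (x : Fˣ) :
    InCycCoset ω e a x ↔ x ^ k = (ω ^ k) ^ a := by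
  have hord : orderOf ω = e * k := (orderOf_eq_card_of_forall_mem_zpowers hω).trans hcard
  constructor
  · rintro ⟨m, rfl⟩
    calc (ω ^ a * (ω ^ e) ^ m) ^ k = (ω ^ k) ^ a * (ω ^ (e * k)) ^ m := by
          simp only [mul_pow, ← pow_mul, mul_comm, mul_left_comm]
      _ = (ω ^ k) ^ a := by rw [← hord, pow_orderOf_eq_one, one_pow, mul_one]
  · intro hx
    obtain ⟨j, hj : ω ^ j = (ω ^ a)⁻¹ * x⟩ := mem_powers_iff_mem_zpowers.2 (hω ((ω ^ a)⁻¹ * x))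
    have hpow : ω ^ (j * k) = 1 := by
      rw [pow_mul, hj, mul_pow, hx, inv_pow, pow_right_comm, inv_mul_cancel]
    have hk : 0 < k := Nat.pos_of_mul_pos_left (hcard ▸ Nat.card_pos)
    obtain ⟨m, rfl⟩ : e ∣ j :=
      Nat.dvd_of_mul_dvd_mul_right hk (hord ▸ orderOf_dvd_of_pow_eq_one hpow)
    exact ⟨m, by rw [← pow_mul, hj, mul_inv_cancel_left]⟩

variable {K : Type*} [Field K] [Algebra K F]

theorem inCycCoset_iff_norm_eq (hω : ∀ x : Fˣ, x ∈ Subgroup.zpowers ω) (a : ℕ) (x : Fˣ) :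
    InCycCoset ω (Nat.card K - 1) a x ↔
      Algebra.norm K (x : F) = Algebra.norm K (ω : F) ^ a := by
  have hdvd : Nat.card K - 1 ∣ Nat.card F - 1 := by
    have : Finite K := .of_injective _ (algebraMap K F).injective
    rw [natCard_eq_pow_finrank (K := K) (V := F)]
    exact Nat.sub_one_dvd_pow_sub_one _ _
  have hcard : Nat.card Fˣ = (Nat.card K - 1) * ((Nat.card F - 1) / (Nat.card K - 1)) := by
    rw [Nat.card_units, Nat.mul_div_cancel' hdvd]
  rw [inCycCoset_iff_pow_eq hω hcard, ← (algebraMap K F).injective.eq_iff, map_pow,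
    FiniteField.algebraMap_norm_eq_pow, FiniteField.algebraMap_norm_eq_pow, Units.ext_iff]
  simp only [Units.val_pow_eq_pow_val]

theorem cycNum_eq_natCard_norm_eq (hω : ∀ x : Fˣ, x ∈ Subgroup.zpowers ω) (a b : ℕ) :
    cycNum ω (Nat.card K - 1) a b = Nat.card {x : F |
      Algebra.norm K x = Algebra.norm K (ω : F) ^ a ∧
      Algebra.norm K (x + 1) = Algebra.norm K (ω : F) ^ b} := by
  have ne_zero_of_norm_eq {c : ℕ} {x : F} (hx : Algebra.norm K x = Algebra.norm K (ω : F) ^ c) :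
      x ≠ 0 :=
    Algebra.norm_ne_zero_iff.1 (hx ▸ pow_ne_zero c (Algebra.norm_ne_zero_iff.2 ω.ne_zero))
  simp only [cycNum, inCycCoset_iff_norm_eq hω]
  refine Nat.card_congr (Equiv.ofBijective (fun x ↦ ⟨x.1, ?_⟩) ⟨fun x y hxy ↦ ?_, ?_⟩)
  · obtain ⟨hx, y, hy, hyx⟩ := x.2
    exact ⟨hx, hyx ▸ hy⟩
  · exact Subtype.ext (Units.ext (congrArg Subtype.val hxy))
  · rintro ⟨x, hx, hx1⟩
    exact ⟨⟨.mk0 x (ne_zero_of_norm_eq hx), hx, .mk0 (x + 1) (ne_zero_of_norm_eq hx1), hx1, rfl⟩,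
      rfl⟩

end CyclotomicCosets

theorem cycNum_odd_prime_decomposition_general {q r k : ℕ} (hk : k = (q ^ r - 1) / (q - 1))
    {K F : Type*} [Field K] [Field F] [Fintype K] [Fintype F] [Algebra K F]
    (hK : Fintype.card K = q) (hF : Fintype.card F = q ^ r)
    (ω : Fˣ) (hω : ∀ x : Fˣ, x ∈ Subgroup.zpowers ω)
    (ζ : K) (hζ : algebraMap K F ζ = (ω : F) ^ k) (a b : ℕ) :
    cycNum ω (q - 1) a b = ∑ d ∈ r.divisors, d * Nat.card {f : K[X] |
      f.Monic ∧ Irreducible f ∧ f.natDegree = d ∧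
      f.eval 0 ^ (r / d) = (-1) ^ r * ζ ^ a ∧ f.eval (-1) ^ (r / d) = (-1) ^ r * ζ ^ b} := by
  rw [← Nat.card_eq_fintype_card] at hK hF
  have hr : finrank K F = r := by
    refine Nat.pow_right_injective (Finite.one_lt_card (α := K)) ?_
    simpa only [hF, hK] using (natCard_eq_pow_finrank (K := K) (V := F)).symm
  have hnorm : Algebra.norm K (ω : F) = ζ := (algebraMap K F).injective <| by
    rw [FiniteField.algebraMap_norm_eq_pow, hF, hK, ← hk, hζ]
  rw [← hK, cycNum_eq_natCard_norm_eq hω, natCard_norm_eq_and_norm_add_one_eq, hnorm, hr]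

/-- For an odd prime `ℓ`, `r = ℓ`, and `ζ = ω^k` viewed in `𝔽_q`, the cyclotomic number
decomposes as `(a,b)_{q-1} = #T_ℓ(a,b) + ℓ · #I_ℓ(a,b)`, where
`T_ℓ(a,b) = {x ∈ 𝔽_q : x^ℓ = ζ^a, (x+1)^ℓ = ζ^b}` and `I_ℓ(a,b)` is the set of monic
irreducible polynomials of degree `ℓ` over `𝔽_q` with `f(0) = -ζ^a` and `f(-1) = -ζ^b`. -/
theorem cycNum_odd_prime_decomposition {p n q ℓ k : ℕ} (hp : p.Prime) (hn : 1 ≤ n)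
    (hq : q = p ^ n) (hℓ : ℓ.Prime) (hodd : Odd ℓ) (hk : k = (q ^ ℓ - 1) / (q - 1))
    {K F : Type*} [Field K] [Field F] [Fintype K] [Fintype F] [Algebra K F]
    (hK : Fintype.card K = q) (hF : Fintype.card F = q ^ ℓ)
    (ω : Fˣ) (hω : ∀ x : Fˣ, x ∈ Subgroup.zpowers ω)
    (ζ : K) (hζ : algebraMap K F ζ = (ω : F) ^ k)
    (a b : ℕ) (ha : a ≤ q - 2) (hb : b ≤ q - 2) :
    cycNum ω (q - 1) a b =
      Nat.card {x : K | x ^ ℓ = ζ ^ a ∧ (x + 1) ^ ℓ = ζ ^ b} +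
        ℓ * Nat.card {f : Polynomial K | f.Monic ∧ Irreducible f ∧ f.natDegree = ℓ ∧
          f.eval 0 = -ζ ^ a ∧ f.eval (-1) = -ζ ^ b} := by
  have neg_one_sub_pow (x : K) : (-1 - x) ^ ℓ = -(x + 1) ^ ℓ := by rw [← hodd.neg_pow]; ring
  rw [cycNum_odd_prime_decomposition_general hk hK hF ω hω ζ hζ, hℓ.sum_divisors, add_comm,
    natCard_monic_irreducible_natDegree_one]
  simp [Nat.div_self hℓ.pos, hodd.neg_pow, neg_one_sub_pow]
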